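/- For every odd n ≥ 3, the function h_n defined by h_n(x) = sgn(2·(x_1 + ⋯ + x_{n−3}) − (x_{n−2} + x_{n−1} + x_n)) satisfies W^(0)[h_n] = 0 and W^(1)[h_n] = W^(1)[g_n]. Consequently, for every odd n ≥ 5, W^(1)[h_n] < W^(1)[Maj_n]. -/

import Mathlib

open Finset

namespace BKS

/-- sign function: 1 if z ≥ 0, -1 otherwise. -/
noncomputable def sgn (z : ℝ) : ℝ := if 0 ≤ z then 1 else -1

/-- encode Bool as the ±1 value of a bit. -/
def chi (b : Bool) : ℝ := if b then 1 else -1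

/-- Fourier coefficient of f at S. -/
noncomputable def fourierCoeff {n : ℕ} (f : (Fin n → Bool) → ℝ) (S : Finset (Fin n)) : ℝ :=
  (1 / 2 ^ n : ℝ) * ∑ x : Fin n → Bool, f x * ∏ i ∈ S, chi (x i)

/-- Fourier weight of f at level k: W^(k)[f]. -/
noncomputable def fourierWeight {n : ℕ} (k : ℕ) (f : (Fin n → Bool) → ℝ) : ℝ :=
  ∑ S ∈ Finset.univ.filter (fun S : Finset (Fin n) => S.card = k), (fourierCoeff f S) ^ 2

/-- Noise stability of f at ρ. -/
noncomputable def noiseStab {n : ℕ} (ρ : ℝ) (f : (Fin n → Bool) → ℝ) : ℝ :=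
  ∑ k ∈ Finset.range (n + 1), ρ ^ k * fourierWeight k f

/-- Majority function on n bits. -/
noncomputable def Maj (n : ℕ) : (Fin n → Bool) → ℝ := fun x => sgn (∑ i, chi (x i))

/-- The function g_n(x) = sgn(2(x_1 + ⋯ + x_{n-3}) + x_{n-2} + x_{n-1} + x_n). -/
noncomputable def gfun (n : ℕ) : (Fin n → Bool) → ℝ :=
  fun x => sgn (∑ i : Fin n, (if (i : ℕ) < n - 3 then (2 : ℝ) else 1) * chi (x i))

/-- f is a linear threshold function. -/
def IsLTF {n : ℕ} (f : (Fin n → Bool) → ℝ) : Prop :=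
  ∃ (w0 : ℝ) (w : Fin n → ℝ), ∀ x, f x = sgn (w0 + ∑ i, w i * chi (x i))


/-- The function h_n(x) = sgn(2(x_1 + ⋯ + x_{n-3}) − (x_{n-2} + x_{n-1} + x_n)). -/
noncomputable def hfun (n : ℕ) : (Fin n → Bool) → ℝ :=
  fun x => sgn (∑ i : Fin n, (if (i : ℕ) < n - 3 then (2 : ℝ) else -1) * chi (x i))

/-- The sum of the bits. -/
noncomputable def X {m : ℕ} (y : Fin m → Bool) : ℝ := ∑ i, chi (y i)

/-- Number of balanced points. -/
noncomputable def P (m : ℕ) : ℝ := ∑ y : Fin m → Bool, if X y = 0 then 1 else 0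

/-- Sign with value zero at zero. -/
noncomputable def sg (z : ℝ) : ℝ := if 0 < z then 1 else if z = 0 then 0 else -1

lemma sum_insertNth {m : ℕ} (i : Fin (m + 1)) (F : (Fin (m + 1) → Bool) → ℝ) :
    ∑ x, F x = ∑ y : Fin m → Bool, (F (i.insertNth true y) + F (i.insertNth false y)) := by
  rw [← (Fin.insertNthEquiv (fun _ => Bool) i).sum_comp, Fintype.sum_prod_type]
  simp [Finset.sum_add_distrib]
  rfl

lemma sum_snoc {m : ℕ} (F : (Fin (m + 1) → Bool) → ℝ) :
    ∑ x, F x = ∑ y : Fin m → Bool,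
      (F (Fin.snoc (α := fun _ => Bool) y true) + F (Fin.snoc (α := fun _ => Bool) y false)) := by
  rw [sum_insertNth (Fin.last m)]
  simp [Fin.insertNth_last']

lemma X_insertNth {m : ℕ} (i : Fin (m + 1)) (b : Bool) (y : Fin m → Bool) :
    X (i.insertNth b y : Fin (m + 1) → Bool) = chi b + X y := by
  simp [X, Fin.sum_univ_succAbove _ i]

lemma X_par {m : ℕ} (y : Fin m → Bool) : ∃ k : ℤ, X y = 2 * k + m := by
  have : ∀ b, ∃ k : ℤ, chi b = 2 * k + 1 := by
    intro b
    cases b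
    · exact ⟨-1, by norm_num [chi]⟩
    · exact ⟨0, by norm_num [chi]⟩
  choose f hf using this
  refine ⟨∑ i, f (y i), ?_⟩
  simp [X, hf, Finset.sum_add_distrib, Finset.mul_sum]

lemma X_card {m : ℕ} (y : Fin m → Bool) :
    X y = 2 * ((univ.filter fun i => y i = true).card : ℝ) - m := by
  have : ∀ b, chi b = 2 * (if b = true then 1 else 0) - 1 := by
    intro b; cases b <;> norm_num [chi]
  simp only [X, this, Finset.sum_sub_distrib, ← Finset.mul_sum]
  simp

lemma P_eq (k : ℕ) : P (2 * k) = Nat.centralBinom k := by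
  have h1 : P (2 * k) = ((univ.filter fun s : Finset (Fin (2 * k)) => s.card = k).card : ℝ) := by
    unfold P
    rw [Finset.sum_ite, Finset.sum_const_zero, add_zero, Finset.sum_const, nsmul_eq_mul, mul_one]
    congr 1
    refine Finset.card_bij' (fun y _ => univ.filter fun i => y i = true)
      (fun s _ => fun i => decide (i ∈ s)) ?_ ?_ ?_ ?_
    · intro y hy
      simp only [mem_filter, mem_univ, true_and, X_card] at hy ⊢
      push_cast at hy
      have : (((univ.filter fun i => y i = true).card : ℝ)) = k := by linarith
      exact_mod_cast this
    · intro s hs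
      simp only [mem_filter, mem_univ, true_and, X_card] at hs ⊢
      simp [hs]
    · intro y hy
      ext i
      simp
    · intro s hs
      ext i
      simp
  rw [h1]
  have h2 : (univ.filter fun s : Finset (Fin (2 * k)) => s.card = k) = powersetCard k univ := by
    ext s; simp [mem_powersetCard]
  rw [h2, card_powersetCard]
  simp [Nat.centralBinom]

lemma P_succ (k : ℕ) : ((k : ℝ) + 1) * P (2 * (k + 1)) = 2 * (2 * k + 1) * P (2 * k) := by
  rw [P_eq, P_eq]
  exact_mod_cast Nat.succ_mul_centralBinom_succ k

/-- first-level sum of the majority -/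
lemma maj_sum (k : ℕ) (i : Fin (2 * k + 1)) :
    ∑ x : Fin (2 * k + 1) → Bool, sgn (X x) * chi (x i) = 2 * P (2 * k) := by
  rw [sum_insertNth i, P, Finset.mul_sum]
  refine Finset.sum_congr rfl fun y _ => ?_
  obtain ⟨j, hj⟩ := X_par y
  have hj' : X y = 2 * ((j + k : ℤ) : ℝ) := by rw [hj]; push_cast; ring
  generalize j + k = l at hj'
  simp only [X_insertNth, Fin.insertNth_apply_same, hj', chi, sgn]
  rcases lt_trichotomy l 0 with h | h | h
  · have : (l : ℝ) ≤ -1 := by exact_mod_cast (by omega : l ≤ -1)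
    simp only [if_true, Bool.false_eq_true, if_false]
    rw [if_neg (by linarith), if_neg (by linarith), if_neg (by intro h; linarith)]
    simp
  · subst h
    norm_num
  · have : (1 : ℝ) ≤ l := by exact_mod_cast (by omega : 1 ≤ l)
    simp only [if_true, Bool.false_eq_true, if_false]
    rw [if_pos (by linarith), if_pos (by linarith), if_neg (by intro h; linarith)]
    simp

lemma sg_sum (k : ℕ) (i : Fin (2 * k)) :
    ∑ x : Fin (2 * k) → Bool, sg (X x) * chi (x i) = P (2 * k) := by
  obtain ⟨k, rfl⟩ : ∃ r, k = r + 1 := ⟨k - 1, by have := i.2; omega⟩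
  change ∑ x : Fin (2 * k + 1 + 1) → Bool, sg (X x) * chi (x i) = P (2 * k + 1 + 1)
  rw [sum_insertNth (m := 2 * k + 1) i, P, sum_insertNth (m := 2 * k + 1) i]
  refine Finset.sum_congr rfl fun y _ => ?_
  obtain ⟨j, hj⟩ := X_par y
  have hj' : X y = 2 * ((j + k : ℤ) : ℝ) + 1 := by rw [hj]; push_cast; ring
  generalize j + k = l at hj'
  simp only [X_insertNth, Fin.insertNth_apply_same, hj', chi, sg]
  rcases (by omega : l ≤ -2 ∨ l = -1 ∨ l = 0 ∨ 1 ≤ l) with h | h | h | h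
  · have : (l : ℝ) ≤ -2 := by exact_mod_cast h
    simp only [if_true, Bool.false_eq_true, if_false]
    rw [if_neg (by linarith), if_neg (by linarith), if_neg (by linarith), if_neg (by linarith),
      if_neg (by linarith), if_neg (by linarith)]
    simp
  · subst h
    norm_num
  · subst h
    norm_num
  · have : (1 : ℝ) ≤ l := by exact_mod_cast h
    simp only [if_true, Bool.false_eq_true, if_false]
    rw [if_pos (by linarith), if_pos (by linarith), if_neg (by linarith), if_neg (by linarith)]
    simp

lemma sg_sum_zero (m : ℕ) : ∑ x : Fin m → Bool, sg (X x) = 0 := by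
  have e : ∑ x : Fin m → Bool, sg (X x) = ∑ x : Fin m → Bool, sg (X fun i => !(x i)) := by
    refine (Fintype.sum_equiv (Function.Involutive.toPerm (fun x : Fin m → Bool => fun i => !(x i))
      (fun x => by ext i; simp)) _ _ fun x => ?_)
    simp [Function.Involutive.toPerm]
  have h : ∀ x : Fin m → Bool, sg (X fun i => !(x i)) = - sg (X x) := by
    intro x
    have : (X fun i => !(x i)) = - X x := by
      have : ∀ b, chi (!b) = - chi b := by intro b; cases b <;> simp [chi]
      simp [X, this]
    rw [this]
    unfold sg
    rcases lt_trichotomy (X x) 0 with h | h | h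
    · simp [h, h.ne, h.le, not_lt.2 h.le]
    · simp [h]
    · simp [h, h.ne', h.le, not_lt.2 h.le]
  simp only [h, Finset.sum_neg_distrib] at e
  linarith

/-- append three bits -/
def app {m : ℕ} (y : Fin m → Bool) (a b c : Bool) : Fin (m + 3) → Bool :=
  Fin.snoc (α := fun _ => Bool) (Fin.snoc (α := fun _ => Bool)
    (Fin.snoc (α := fun _ => Bool) y a) b) c

lemma sum_app {m : ℕ} (F : (Fin (m + 3) → Bool) → ℝ) :
    ∑ x, F x = ∑ y : Fin m → Bool,
      (F (app y true true true) + F (app y true true false) + F (app y true false true)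
      + F (app y true false false) + F (app y false true true) + F (app y false true false)
      + F (app y false false true) + F (app y false false false)) := by
  rw [sum_snoc, sum_snoc, sum_snoc]
  refine Finset.sum_congr rfl fun y _ => ?_
  simp only [app]
  ring

lemma g_app {m : ℕ} (y : Fin m → Bool) (a b c : Bool) :
    gfun (m + 3) (app y a b c) = sgn (2 * X y + chi a + chi b + chi c) := by
  simp [gfun, app, X, Fin.sum_univ_castSucc, Finset.mul_sum]

lemma app_1 {m : ℕ} (y : Fin m → Bool) (a b c : Bool) (i : Fin m) :
    app y a b c i.castSucc.castSucc.castSucc = y i := by simp [app]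
lemma app_2 {m : ℕ} (y : Fin m → Bool) (a b c : Bool) :
    app y a b c (Fin.last m).castSucc.castSucc = a := by simp [app]
lemma app_3 {m : ℕ} (y : Fin m → Bool) (a b c : Bool) :
    app y a b c (Fin.last (m + 1)).castSucc = b := by simp [app]
lemma app_4 {m : ℕ} (y : Fin m → Bool) (a b c : Bool) :
    app y a b c (Fin.last (m + 2)) = c := by simp [app]

lemma sgn_val (k : ℕ) (y : Fin (2 * k) → Bool) (a b c : Bool) :
    sgn (2 * X y + chi a + chi b + chi c) =
      sg (X y) + (if X y = 0 then 1 else 0) * sgn (chi a + chi b + chi c) := by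
  obtain ⟨j, hj⟩ := X_par y
  have hj' : X y = 2 * ((j + k : ℤ) : ℝ) := by rw [hj]; push_cast; ring
  generalize j + k = l at hj'
  have hb : ∀ b, -1 ≤ chi b ∧ chi b ≤ 1 := by intro b; cases b <;> norm_num [chi]
  have ha := hb a
  have hb' := hb b
  have hc := hb c
  rw [hj']
  rcases lt_trichotomy l 0 with h | h | h
  · have : (l : ℝ) ≤ -1 := by exact_mod_cast (by omega : l ≤ -1)
    unfold sgn sg
    rw [if_neg (by linarith), if_neg (by linarith), if_neg (by linarith), if_neg (by linarith)]
    simp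
  · subst h
    simp [sg]
  · have : (1 : ℝ) ≤ l := by exact_mod_cast (by omega : 1 ≤ l)
    unfold sgn sg
    rw [if_pos (by linarith), if_pos (by linarith), if_neg (by linarith)]
    simp

lemma g_sum0 (k : ℕ) : ∑ x, gfun (2 * k + 3) x = 0 := by
  rw [sum_app]
  have := sg_sum_zero (2 * k)
  calc _ = ∑ y : Fin (2 * k) → Bool, 8 * sg (X y) := by
        refine Finset.sum_congr rfl fun y _ => ?_
        simp only [g_app, sgn_val]
        norm_num [sgn, chi]
        ring
    _ = 0 := by rw [← Finset.mul_sum, this, mul_zero]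

lemma g_sum1 (k : ℕ) (i : Fin (2 * k)) :
    ∑ x, gfun (2 * k + 3) x * chi (x i.castSucc.castSucc.castSucc) = 8 * P (2 * k) := by
  rw [sum_app, ← sg_sum k i, Finset.mul_sum]
  refine Finset.sum_congr rfl fun y _ => ?_
  simp only [g_app, sgn_val, app_1]
  norm_num [sgn, show chi true = 1 from rfl, show chi false = -1 from rfl]
  ring

lemma g_sum2 (k : ℕ) :
    ∑ x, gfun (2 * k + 3) x * chi (x (Fin.last (2 * k)).castSucc.castSucc) = 4 * P (2 * k) := by
  rw [sum_app, P, Finset.mul_sum]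
  refine Finset.sum_congr rfl fun y _ => ?_
  simp only [g_app, sgn_val, app_2]
  split_ifs <;> norm_num [sgn, show chi true = 1 from rfl, show chi false = -1 from rfl] <;> ring

lemma g_sum3 (k : ℕ) :
    ∑ x, gfun (2 * k + 3) x * chi (x (Fin.last (2 * k + 1)).castSucc) = 4 * P (2 * k) := by
  rw [sum_app, P, Finset.mul_sum]
  refine Finset.sum_congr rfl fun y _ => ?_
  simp only [g_app, sgn_val, app_3]
  split_ifs <;> norm_num [sgn, show chi true = 1 from rfl, show chi false = -1 from rfl] <;> ring

lemma g_sum4 (k : ℕ) :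
    ∑ x, gfun (2 * k + 3) x * chi (x (Fin.last (2 * k + 2))) = 4 * P (2 * k) := by
  rw [sum_app, P, Finset.mul_sum]
  refine Finset.sum_congr rfl fun y _ => ?_
  simp only [g_app, sgn_val, app_4]
  split_ifs <;> norm_num [sgn, show chi true = 1 from rfl, show chi false = -1 from rfl] <;> ring

lemma weight_one {n : ℕ} (f : (Fin n → Bool) → ℝ) :
    fourierWeight 1 f = ∑ i, ((1 / 2 ^ n : ℝ) * ∑ x, f x * chi (x i)) ^ 2 := by
  unfold fourierWeight
  have : (univ.filter fun S : Finset (Fin n) => S.card = 1)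
      = univ.image (fun i => ({i} : Finset (Fin n))) := by
    ext S
    simp [Finset.card_eq_one, eq_comm]
  rw [this, Finset.sum_image (by intro a _ b _ h; simpa using h)]
  simp [fourierCoeff]

lemma weight_zero {n : ℕ} (f : (Fin n → Bool) → ℝ) :
    fourierWeight 0 f = ((1 / 2 ^ n : ℝ) * ∑ x, f x) ^ 2 := by
  unfold fourierWeight
  have : (univ.filter fun S : Finset (Fin n) => S.card = 0) = {∅} := by
    ext S
    simp
  rw [this]
  simp [fourierCoeff]

/-- flip the last three bits -/
def flip3 (n : ℕ) (x : Fin n → Bool) : Fin n → Bool :=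
  fun i => if (i : ℕ) < n - 3 then x i else !(x i)

lemma flip3_inv (n : ℕ) : Function.Involutive (flip3 n) := by
  intro x
  ext i
  by_cases h : (i : ℕ) < n - 3 <;> simp [flip3, h]

lemma chi_flip3 (n : ℕ) (x : Fin n → Bool) (i : Fin n) :
    chi (flip3 n x i) = (if (i : ℕ) < n - 3 then 1 else -1) * chi (x i) := by
  by_cases h : (i : ℕ) < n - 3 <;> cases hx : x i <;> simp [flip3, h, hx, chi]

lemma g_flip3 (n : ℕ) (x : Fin n → Bool) : gfun n (flip3 n x) = hfun n x := by
  unfold gfun hfun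
  congr 1
  refine Finset.sum_congr rfl fun i _ => ?_
  rw [chi_flip3]
  by_cases h : (i : ℕ) < n - 3 <;> simp [h]

lemma sum_flip3 (n : ℕ) (F : (Fin n → Bool) → ℝ) : ∑ x, F (flip3 n x) = ∑ x, F x :=
  Equiv.sum_comp (flip3_inv n).toPerm F

lemma h_weight_zero (n : ℕ) : fourierWeight 0 (hfun n) = fourierWeight 0 (gfun n) := by
  simp only [weight_zero, ← g_flip3]
  rw [sum_flip3 n (gfun n)]

lemma h_weight_one (n : ℕ) : fourierWeight 1 (hfun n) = fourierWeight 1 (gfun n) := by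
  rw [weight_one, weight_one]
  refine Finset.sum_congr rfl fun i _ => ?_
  rw [← sum_flip3 n (fun x => gfun n x * chi (x i))]
  simp only [g_flip3, chi_flip3]
  by_cases h : (i : ℕ) < n - 3 <;> simp [h]

lemma g_weight (k : ℕ) : fourierWeight 1 (gfun (2 * k + 3)) =
    (1 / 2 ^ (2 * k + 3)) ^ 2 * (P (2 * k)) ^ 2 * (64 * (2 * k) + 48) := by
  rw [weight_one, Fin.sum_univ_castSucc, Fin.sum_univ_castSucc, Fin.sum_univ_castSucc]
  simp only [g_sum1, g_sum2, g_sum3, g_sum4]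
  simp only [Finset.sum_const, card_univ, Fintype.card_fin, nsmul_eq_mul]
  push_cast
  ring

lemma maj_weight (k : ℕ) : fourierWeight 1 (Maj (2 * k + 3)) =
    (1 / 2 ^ (2 * k + 3)) ^ 2 * (P (2 * (k + 1))) ^ 2 * (4 * (2 * k + 3)) := by
  rw [weight_one]
  have h : ∀ i : Fin (2 * k + 3),
      ∑ x, Maj (2 * k + 3) x * chi (x i) = 2 * P (2 * (k + 1)) := maj_sum (k + 1)
  simp only [h]
  simp only [Finset.sum_const, card_univ, Fintype.card_fin, nsmul_eq_mul]
  push_cast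
  ring

theorem stmt12 (n : ℕ) (hn : Odd n) (h3 : 3 ≤ n) :
    fourierWeight 0 (hfun n) = 0 ∧
    fourierWeight 1 (hfun n) = fourierWeight 1 (gfun n) ∧
    (5 ≤ n → fourierWeight 1 (hfun n) < fourierWeight 1 (Maj n)) := by
  obtain ⟨k, rfl⟩ : ∃ k, n = 2 * k + 3 := by
    obtain ⟨r, hr⟩ := hn
    exact ⟨r - 1, by omega⟩
  refine ⟨?_, h_weight_one _, fun h5 => ?_⟩
  · rw [h_weight_zero, weight_zero, g_sum0]
    simp
  · rw [h_weight_one, g_weight, maj_weight]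
    have hk : (1 : ℝ) ≤ k := by exact_mod_cast (by omega : 1 ≤ k)
    have hP : 0 < P (2 * k) := by
      rw [P_eq]
      exact_mod_cast Nat.centralBinom_pos k
    have hs : P (2 * (k + 1)) = 2 * (2 * k + 1) * P (2 * k) / (k + 1) := by
      rw [eq_div_iff (by positivity), ← P_succ]
      ring
    rw [hs, mul_assoc, mul_assoc]
    refine mul_lt_mul_of_pos_left ?_ (by positivity)
    rw [div_pow, div_mul_eq_mul_div, lt_div_iff₀ (by positivity)]
    have : (2 * (2 * (k : ℝ) + 1) * P (2 * k)) ^ 2 * (4 * (2 * k + 3))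
        - P (2 * k) ^ 2 * (64 * (2 * k) + 48) * (k + 1) ^ 2 = P (2 * k) ^ 2 * (16 * k ^ 2) := by
      ring
    have h2 : 0 < P (2 * k) ^ 2 * (16 * (k : ℝ) ^ 2) := by positivity
    linarith

end BKS
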